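/- arXiv:2504.15957 — 2 statements merged into one kernel-verified Lean document; each statement's English description precedes it below -/
import Mathlib

section
/- Let F be a field of characteristic 2, let p = x^d + p₁x^{d-1} + … + p_d ∈ F[x] be a monic irreducible polynomial of degree d that is inseparable (i.e., its formal derivative is zero, equivalently p_k = 0 for all odd k), let L = F[x]/(p), and let t_p : L → F be the F-linear map with t_p(x^j) = 0 for 0 ≤ j ≤ d-2 and t_p(x^{d-1}) = 1. Then for every a ∈ F, the Scharlau transfer t_p∘⟨⟨x; a]] (a quadratic form of dimension 4d over F) is Witt equivalent to the 2-fold quadratic Pfister form ⟨⟨p_d; a]] over F. -/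
open QuadraticMap Polynomial

/-- The binary quadratic form `[a,b] : (u,v) ↦ a u² + u v + b v²` over `K`. -/
noncomputable def binQF (K : Type*) [CommRing K] (a b : K) : QuadraticForm K (K × K) :=
  a • QuadraticMap.linMulLin (LinearMap.fst K K K) (LinearMap.fst K K K)
    + QuadraticMap.linMulLin (LinearMap.fst K K K) (LinearMap.snd K K K)
    + b • QuadraticMap.linMulLin (LinearMap.snd K K K) (LinearMap.snd K K K)

/-- The hyperbolic plane `(u,v) ↦ u v` over `K`. -/
noncomputable def hypQF (K : Type*) [CommRing K] : QuadraticForm K (K × K) :=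
  QuadraticMap.linMulLin (LinearMap.fst K K K) (LinearMap.snd K K K)

/-- The orthogonal sum of `r` copies of the hyperbolic plane over `K`. -/
noncomputable def hypPow (K : Type*) [CommRing K] (r : ℕ) : QuadraticForm K (Fin r → K × K) :=
  QuadraticMap.pi fun _ => hypQF K

/-- Witt equivalence of quadratic forms over `K`: `Q₁ ⊥ H^{⊥r}` is isometric to
`Q₂ ⊥ H^{⊥s}` for some `r, s`. -/
def WittEquiv {K : Type*} [CommRing K] {V₁ V₂ : Type*} [AddCommGroup V₁] [Module K V₁]
    [AddCommGroup V₂] [Module K V₂]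
    (Q₁ : QuadraticForm K V₁) (Q₂ : QuadraticForm K V₂) : Prop :=
  ∃ r s : ℕ, (Q₁.prod (hypPow K r)).Equivalent (Q₂.prod (hypPow K s))

/-- The Scharlau transfer of a quadratic form `Q` over `L` along an `F`-linear functional
`t : L → F`: the quadratic form `t ∘ Q` over `F` on `V` viewed as an `F`-vector space. -/
noncomputable def scharlauTransfer {F L : Type*} [Field F] [CommRing L] [Algebra F L]
    (V : Type*) [AddCommGroup V] [Module L V] [Module F V] [IsScalarTower F L V]
    (t : L →ₗ[F] F) (Q : QuadraticForm L V) : QuadraticForm F V :=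
  t.compQuadraticMap' Q

/-- The 2-fold quadratic Pfister form `⟨⟨c; e]] = [1,e] ⊥ c·[1,e]` over `K`. -/
noncomputable def pfister2QF (K : Type*) [CommRing K] (c e : K) :
    QuadraticForm K ((K × K) × (K × K)) :=
  (binQF K 1 e).prod (c • binQF K 1 e)

/-- A nonsingular quadratic form (one with trivial polar radical) that vanishes on a subspace of
half the dimension is isometric to an orthogonal sum of hyperbolic planes. -/
theorem equivalent_hypPow_of_lagrangian {K V N : Type*} [Field K] [AddCommGroup V] [Module K V]
    [AddCommGroup N] [Module K N] [FiniteDimensional K V] [FiniteDimensional K N]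
    (Q : QuadraticForm K V) (hQ : ∀ v, (∀ w, polar Q v w = 0) → v = 0)
    (j : N →ₗ[K] V) (hj : Function.Injective j) (hQj : ∀ n, Q (j n) = 0)
    (hdim : Module.finrank K V = 2 * Module.finrank K N) :
    Q.Equivalent (hypPow K (Module.finrank K N)) := by
  let B : V →ₗ[K] Module.Dual K V := Q.polarBilin
  have hBinj : Function.Injective B := by
    rw [injective_iff_map_eq_zero]
    exact fun v hv => hQ v fun w => LinearMap.congr_fun hv w
  have hBsurj : Function.Surjective B :=
    (LinearMap.injective_iff_surjective_of_finrank_eq_finrank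
      Subspace.dual_finrank_eq.symm).1 hBinj
  obtain ⟨φ, hφ⟩ := (j.dualMap ∘ₗ B).exists_rightInverse_of_surjective <|
    LinearMap.range_eq_top.2 <| (LinearMap.dualMap_surjective_of_injective hj).comp hBsurj
  have hφ' (f : Module.Dual K N) (n : N) : polar Q (φ f) (j n) = f n :=
    LinearMap.congr_fun (LinearMap.congr_fun hφ f) n
  have hjj (n n' : N) : polar Q (j n) (j n') = 0 := by
    simp [polar, ← map_add, hQj]
  obtain ⟨A, hA⟩ := LinearMap.BilinMap.toQuadraticMap_surjective (Q.comp φ)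
  have hA' (f : Module.Dual K N) : A f f = Q (φ f) := by
    simpa using DFunLike.congr_fun hA f
  let s : Module.Dual K N →ₗ[K] N := (Module.evalEquiv K N).symm.toLinearMap ∘ₗ A
  have hs (f g : Module.Dual K N) : g (s f) = A f g := by
    simp [s]
  let Ψ : Module.Dual K N × N →ₗ[K] V := (φ - j ∘ₗ s).coprod j
  have hΨ (x : Module.Dual K N × N) : Ψ x = φ x.1 + j (x.2 - s x.1) := by
    simp [Ψ]; abel
  have hQΨ (x : Module.Dual K N × N) : Q (Ψ x) = x.1 x.2 := by
    rw [hΨ, QuadraticMap.map_add Q, hQj, hφ', map_sub, hs, hA']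
    ring
  have hΨinj : Function.Injective Ψ := by
    rw [injective_iff_map_eq_zero]
    rintro ⟨f, n⟩ hx
    have hf : f = 0 := by
      ext n'
      have h := polar_add_left Q (φ f) (j (n - s f)) (j n')
      rw [← hΨ (f, n), hx, polar_zero_left, hφ', hjj, add_zero] at h
      exact h.symm
    subst hf
    simpa [hΨ, map_eq_zero_iff j hj] using hx
  let e : (Module.Dual K N × N) ≃ₗ[K] V := Ψ.linearEquivOfInjective hΨinj <| by
    rw [Module.finrank_prod, Subspace.dual_finrank_eq, hdim, two_mul]
  let b := Module.finBasis K N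
  let g : (Module.Dual K N × N) ≃ₗ[K] (Fin (Module.finrank K N) → K × K) :=
    (b.dualBasis.equivFun.prodCongr b.equivFun) ≪≫ₗ
      { toFun := fun x i => (x.1 i, x.2 i)
        invFun := fun y => (fun i => (y i).1, fun i => (y i).2)
        map_add' := fun _ _ => rfl
        map_smul' := fun _ _ => rfl
        left_inv := fun _ => rfl
        right_inv := fun _ => rfl }
  refine ⟨⟨e.symm ≪≫ₗ g, fun v => ?_⟩⟩
  obtain ⟨x, rfl⟩ := e.surjective v
  have hex : Q (e x) = x.1 x.2 := hQΨ x
  change hypPow K _ (g (e.symm (e x))) = Q (e x)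
  rw [LinearEquiv.symm_apply_apply, hex]
  conv_rhs => rw [← b.sum_equivFun x.2, map_sum]
  simp [hypPow, hypQF, g, QuadraticMap.pi_apply, mul_comm]

/-- The polar radical of an orthogonal sum is trivial if those of the summands are. -/
theorem eq_zero_of_polar_prod_eq_zero {K V W : Type*} [CommRing K] [AddCommGroup V] [Module K V]
    [AddCommGroup W] [Module K W] {Q : QuadraticForm K V} {R : QuadraticForm K W}
    (hQ : ∀ v, (∀ w, polar Q v w = 0) → v = 0) (hR : ∀ v, (∀ w, polar R v w = 0) → v = 0)
    (v : V × W) (hv : ∀ w, polar (Q.prod R) v w = 0) : v = 0 := by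
  refine Prod.ext (hQ _ fun w => ?_) (hR _ fun w => ?_)
  · simpa using hv (w, 0)
  · simpa using hv (0, w)

/-- In characteristic two, nonsingular forms `Q` and `R` are Witt equivalent as soon as `Q ⊥ R`
vanishes on a subspace of half the dimension. -/
theorem wittEquiv_of_lagrangian {K V W N : Type*} [Field K] [CharP K 2]
    [AddCommGroup V] [Module K V] [AddCommGroup W] [Module K W] [AddCommGroup N] [Module K N]
    [FiniteDimensional K V] [FiniteDimensional K W] [FiniteDimensional K N]
    (Q : QuadraticForm K V) (R : QuadraticForm K W)
    (hQ : ∀ v, (∀ w, polar Q v w = 0) → v = 0) (hR : ∀ v, (∀ w, polar R v w = 0) → v = 0)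
    (j : N →ₗ[K] V × W) (hj : Function.Injective j) (hQj : ∀ n, Q.prod R (j n) = 0)
    (hdim : Module.finrank K (V × W) = 2 * Module.finrank K N) :
    WittEquiv Q R := by
  obtain ⟨e⟩ := equivalent_hypPow_of_lagrangian (Q.prod R) (eq_zero_of_polar_prod_eq_zero hQ hR)
    j hj hQj hdim
  obtain ⟨e'⟩ := equivalent_hypPow_of_lagrangian (R.prod R) (eq_zero_of_polar_prod_eq_zero hR hR)
    (LinearMap.id.prod LinearMap.id) (fun x y h => congr_arg Prod.fst h)
    (fun w => by simp [CharTwo.add_self_eq_zero]) (by simp [two_mul])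
  let assoc : (Q.prod (R.prod R)).IsometryEquiv ((Q.prod R).prod R) :=
    { (LinearEquiv.prodAssoc K V W W).symm with
      map_app' := fun x => add_assoc (Q x.1) (R x.2.1) (R x.2.2) }
  exact ⟨_, _, ⟨((QuadraticMap.IsometryEquiv.refl Q).prod e').symm.trans <| assoc.trans <|
    (e.prod (QuadraticMap.IsometryEquiv.refl R)).trans (QuadraticMap.IsometryEquiv.prodComm _ _)⟩⟩

theorem pfister2QF_apply {K : Type*} [CommRing K] (c e : K) (v : (K × K) × (K × K)) :
    pfister2QF K c e v = v.1.1 * v.1.1 + v.1.1 * v.1.2 + e * (v.1.2 * v.1.2) +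
      c * (v.2.1 * v.2.1 + v.2.1 * v.2.2 + e * (v.2.2 * v.2.2)) := by
  simp [pfister2QF, binQF, mul_add]

theorem polar_pfister2QF {K : Type*} [CommRing K] [CharP K 2] (c e : K)
    (v w : (K × K) × (K × K)) :
    polar (pfister2QF K c e) v w = v.1.1 * w.1.2 + w.1.1 * v.1.2 +
      c * (v.2.1 * w.2.2 + w.2.1 * v.2.2) := by
  simp only [polar, pfister2QF_apply, Prod.fst_add, Prod.snd_add]
  linear_combination (v.1.1 * w.1.1 + e * (v.1.2 * w.1.2) +
    c * (v.2.1 * w.2.1 + e * (v.2.2 * w.2.2))) * CharTwo.two_eq_zero (R := K)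

/-- The transfer of `⟨⟨c; e]]` along a nonzero functional is nonsingular if `c ≠ 0`. -/
theorem eq_zero_of_polar_scharlauTransfer_pfister2QF {F L : Type*} [Field F] [Field L]
    [Algebra F L] [CharP L 2] (t : L →ₗ[F] F) (ht : t ≠ 0) {c : L} (hc : c ≠ 0) (e : L)
    (v : (L × L) × (L × L))
    (hv : ∀ w, polar (scharlauTransfer _ t (pfister2QF L c e)) v w = 0) : v = 0 := by
  have hpolar (w : (L × L) × (L × L)) : t (polar (pfister2QF L c e) v w) = 0 := by
    rw [← hv w]
    simp [polar, scharlauTransfer]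
  simp only [polar_pfister2QF] at hpolar
  have hnondeg (u : L) (hu : ∀ z, t (u * z) = 0) : u = 0 := by
    by_contra hu0
    refine ht (LinearMap.ext fun z => ?_)
    simpa [hu0] using hu (u⁻¹ * z)
  refine Prod.ext (Prod.ext (hnondeg _ fun z => ?_) (hnondeg _ fun z => ?_))
    (Prod.ext (hnondeg _ fun z => ?_) (hnondeg _ fun z => ?_))
  · simpa using hpolar ((0, z), (0, 0))
  · simpa [mul_comm] using hpolar ((z, 0), (0, 0))
  · simpa [hc, mul_left_comm c] using hpolar ((0, 0), (0, c⁻¹ * z))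
  · simpa [hc, mul_comm _ v.2.2, mul_left_comm c] using hpolar ((0, 0), (c⁻¹ * z, 0))

section LastCoefficient

variable {F : Type*} [Field F] {p : F[X]} {d : ℕ} {t : AdjoinRoot p →ₗ[F] F}

/-- The functional `t_p` reads off the coefficient of degree `d - 1` of a reduced
representative. -/
theorem map_mk_eq_coeff
    (ht : ∀ j : ℕ, j < d → t (AdjoinRoot.root p ^ j) = if j = d - 1 then 1 else 0)
    {g : F[X]} (hg : g.natDegree < d) : t (AdjoinRoot.mk p g) = g.coeff (d - 1) := by
  conv_lhs => rw [g.as_sum_range' d hg]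
  have hterm (i : ℕ) (hi : i ∈ Finset.range d) : t (AdjoinRoot.mk p (monomial i (g.coeff i))) =
      if i = d - 1 then g.coeff i else 0 := by
    rw [← C_mul_X_pow_eq_monomial, map_mul, map_pow, AdjoinRoot.mk_X, AdjoinRoot.mk_C,
      ← AdjoinRoot.algebraMap_eq, ← Algebra.smul_def, map_smul, ht i (Finset.mem_range.1 hi)]
    simp
  rw [map_sum, map_sum, Finset.sum_congr rfl hterm, Finset.sum_ite_eq', if_pos]
  exact Finset.mem_range.2 (by omega)

/-- The functional `t_p` of an inseparable polynomial vanishes on squares. -/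
theorem map_mul_self_eq_zero [CharP F 2] (hmonic : p.Monic) (hinsep : derivative p = 0)
    (hd : p.natDegree = d) (hd0 : 0 < d)
    (ht : ∀ j : ℕ, j < d → t (AdjoinRoot.root p ^ j) = if j = d - 1 then 1 else 0)
    (u : AdjoinRoot p) : t (u * u) = 0 := by
  obtain ⟨g, rfl⟩ := AdjoinRoot.mk_surjective u
  set q := contract 2 p
  have hq : expand F 2 q = p := expand_contract 2 hinsep two_ne_zero
  have hqmonic : q.Monic := by
    rwa [← hq, Polynomial.Monic, leadingCoeff_expand two_pos] at hmonic
  have hqd : q.natDegree * 2 = d := by rw [← hd, ← hq, natDegree_expand]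
  set r := g.map (frobenius F 2) %ₘ q
  have hr : r.natDegree < q.natDegree := natDegree_modByMonic_lt _ hqmonic fun h => by
    rw [h, natDegree_one] at hqd; omega
  have hgg : g * g = expand F 2 r + p * expand F 2 (g.map (frobenius F 2) /ₘ q) := by
    conv_rhs => rw [← hq]
    rw [← map_mul, ← map_add, modByMonic_add_div, ← map_expand, map_frobenius_expand, pow_two]
  rw [← map_mul, hgg, map_add, map_mul, AdjoinRoot.mk_self, zero_mul, add_zero,
    map_mk_eq_coeff ht (by rw [natDegree_expand]; omega), coeff_expand two_pos,
    if_neg (by omega)]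

/-- On polynomials of degree `< m` together with the multiples of `p_d x⁻¹`, the bilinear form
`(w, z) ↦ t_p (x w z)` is the pullback of the diagonal form `⟨1, p_d⟩`. -/
theorem map_root_mul_mul [CharP F 2] (hmonic : p.Monic) {m : ℕ} (hd : p.natDegree = 2 * m)
    (hm : 0 < m)
    (ht : ∀ j : ℕ, j < 2 * m → t (AdjoinRoot.root p ^ j) = if j = 2 * m - 1 then 1 else 0)
    {f g : F[X]} (hf : f.natDegree < m) (hg : g.natDegree < m) (γ δ : F) :
    t (AdjoinRoot.root p * ((AdjoinRoot.mk p f + γ • AdjoinRoot.mk p p.divX) *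
        (AdjoinRoot.mk p g + δ • AdjoinRoot.mk p p.divX))) =
      f.coeff (m - 1) * g.coeff (m - 1) + p.coeff 0 * (γ * δ) := by
  set x := AdjoinRoot.root p
  set y := AdjoinRoot.mk p p.divX
  have hxy : x * y = algebraMap F (AdjoinRoot p) (p.coeff 0) := by
    have h := congr_arg (AdjoinRoot.mk p) p.X_mul_divX_add
    rw [map_add, map_mul, AdjoinRoot.mk_X, AdjoinRoot.mk_C, AdjoinRoot.mk_self] at h
    rw [eq_neg_of_add_eq_zero_left h, ← map_neg, CharTwo.neg_eq, AdjoinRoot.algebraMap_eq]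
  have hsmall {k : F[X]} (hk : k.natDegree < m) : t (AdjoinRoot.mk p k) = 0 := by
    rw [map_mk_eq_coeff ht (by omega), coeff_eq_zero_of_natDegree_lt (by omega)]
  have hy : t y = 1 := by
    rw [map_mk_eq_coeff ht (by rw [natDegree_divX_eq_natDegree_tsub_one]; omega), coeff_divX,
      ← hd, Nat.sub_add_cancel (by omega)]
    exact hmonic
  have hfg : t (AdjoinRoot.mk p (X * (f * g))) = f.coeff (m - 1) * g.coeff (m - 1) := by
    have hdeg : (f * g).natDegree ≤ (m - 1) + (m - 1) :=
      natDegree_mul_le_of_le (by omega) (by omega)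
    have hdegX : (X * (f * g)).natDegree ≤ 1 + ((m - 1) + (m - 1)) :=
      natDegree_mul_le_of_le natDegree_X_le hdeg
    rw [map_mk_eq_coeff ht (by omega), show 2 * m - 1 = (m - 1) + (m - 1) + 1 by omega,
      coeff_X_mul, coeff_mul_add_eq_of_natDegree_le (by omega) (by omega)]
  have hexpand : x * ((AdjoinRoot.mk p f + γ • y) * (AdjoinRoot.mk p g + δ • y)) =
      AdjoinRoot.mk p (X * (f * g)) + (δ * p.coeff 0) • AdjoinRoot.mk p f +
        (γ * p.coeff 0) • AdjoinRoot.mk p g + (γ * δ * p.coeff 0) • y := by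
    simp only [Algebra.smul_def, map_mul, AdjoinRoot.mk_X, ← hxy]
    ring
  rw [hexpand, map_add, map_add, map_add, map_smul, map_smul, map_smul, hsmall hf, hsmall hg, hy,
    hfg]
  simp only [smul_eq_mul]
  ring

end LastCoefficient

/-- Lemma 4.2(iii): for `p` monic irreducible and inseparable over a field `F` of
characteristic `2`, the Scharlau transfer of `⟨⟨x; a]]` is Witt equivalent to
`⟨⟨p_d; a]]`, where `p_d` is the constant coefficient of `p`. -/
theorem transfer_pfister_x_a_inseparable
    (F : Type*) [Field F] [CharP F 2] (p : Polynomial F)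
    (hmonic : p.Monic) (hirr : Irreducible p) (hinsep : Polynomial.derivative p = 0)
    (d : ℕ) (hd : p.natDegree = d)
    (t : AdjoinRoot p →ₗ[F] F)
    (ht : ∀ j : ℕ, j < d → t (AdjoinRoot.root p ^ j) = if j = d - 1 then 1 else 0)
    (a : F) :
    WittEquiv
      (scharlauTransfer _ t
        (pfister2QF (AdjoinRoot p) (AdjoinRoot.root p) (algebraMap F (AdjoinRoot p) a)))
      (pfister2QF F (p.coeff 0) a) := by
  have : Fact (Irreducible p) := ⟨hirr⟩
  have : CharP (AdjoinRoot p) 2 :=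
    charP_of_injective_algebraMap (algebraMap F (AdjoinRoot p)).injective 2
  have hd0 : 0 < d := hd ▸ hirr.natDegree_pos
  obtain ⟨m, rfl⟩ : ∃ m, d = 2 * m := ⟨(contract 2 p).natDegree, by
    rw [← hd, mul_comm, ← natDegree_expand, expand_contract 2 hinsep two_ne_zero]⟩
  have hm : 0 < m := by omega
  have hc : p.coeff 0 ≠ 0 := fun h => hirr.not_isRoot_of_natDegree_ne_one (by omega)
    (show p.IsRoot 0 by rwa [IsRoot, ← coeff_zero_eq_eval_zero])
  have hroot : AdjoinRoot.root p ≠ 0 := fun h => by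
    have hp := AdjoinRoot.eval₂_root p
    rw [h, eval₂_at_zero] at hp
    exact hc ((map_eq_zero _).1 hp)
  have ht0 : t ≠ 0 := fun h => by
    simpa [h] using ht (2 * m - 1) (by omega)
  have : FiniteDimensional F (AdjoinRoot p) := (AdjoinRoot.powerBasis' hmonic).finite
  have hL : Module.finrank F (AdjoinRoot p) = 2 * m := by
    rw [(AdjoinRoot.powerBasis' hmonic).finrank, AdjoinRoot.powerBasis'_dim, hd]
  let D := degreeLT F m
  have hDdeg (f : D) : (f : F[X]).natDegree < m := by
    rcases eq_or_ne (f : F[X]) 0 with h | h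
    · simpa [h] using hm
    · exact (natDegree_lt_iff_degree_lt h).2 (mem_degreeLT.1 f.2)
  have : FiniteDimensional F D := (degreeLT.basis F m).finiteDimensional_of_finite
  have hD : Module.finrank F D = m := by
    rw [Module.finrank_eq_card_basis (degreeLT.basis F m), Fintype.card_fin]
  let ℓ : D × F →ₗ[F] AdjoinRoot p :=
    ((AdjoinRoot.mkₐ p).toLinearMap ∘ₗ D.subtype).coprod
      (LinearMap.toSpanSingleton F _ (AdjoinRoot.mk p p.divX))
  let κ : D × F →ₗ[F] F := lcoeff F (m - 1) ∘ₗ D.subtype ∘ₗ LinearMap.fst F D F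
  let π₁ : AdjoinRoot p × (D × F) × (D × F) →ₗ[F] D × F :=
    LinearMap.fst F _ _ ∘ₗ LinearMap.snd F _ _
  let π₂ : AdjoinRoot p × (D × F) × (D × F) →ₗ[F] D × F :=
    LinearMap.snd F _ _ ∘ₗ LinearMap.snd F _ _
  let j : AdjoinRoot p × (D × F) × (D × F) →ₗ[F]
      ((AdjoinRoot p × AdjoinRoot p) × (AdjoinRoot p × AdjoinRoot p)) × ((F × F) × (F × F)) :=
    (((LinearMap.fst F _ _).prod 0).prod ((ℓ ∘ₗ π₁).prod (ℓ ∘ₗ π₂))).prod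
      (((κ ∘ₗ π₁).prod (κ ∘ₗ π₂)).prod
        ((LinearMap.snd F D F ∘ₗ π₁).prod (LinearMap.snd F D F ∘ₗ π₂)))
  have hj (u : AdjoinRoot p) (s s' : D × F) : j (u, s, s') =
      (((u, 0), (ℓ s, ℓ s')), ((κ s, κ s'), (s.2, s'.2))) := rfl
  have hℓ (s s' : D × F) : t (AdjoinRoot.root p * (ℓ s * ℓ s')) =
      κ s * κ s' + p.coeff 0 * (s.2 * s'.2) :=
    map_root_mul_mul hmonic hd hm ht (hDdeg s.1) (hDdeg s'.1) s.2 s'.2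
  have hℓinj (s : D × F) (hs : ℓ s = 0) (hs2 : s.2 = 0) : s = 0 := by
    have hmk : AdjoinRoot.mk p (s.1 : F[X]) = 0 := by
      simpa [ℓ, hs2] using hs
    refine Prod.ext (Subtype.ext ?_) hs2
    by_contra hne
    have := natDegree_le_of_dvd (AdjoinRoot.mk_eq_zero.1 hmk) hne
    have := hDdeg s.1
    omega
  refine wittEquiv_of_lagrangian _ _
    (eq_zero_of_polar_scharlauTransfer_pfister2QF t ht0 hroot _)
    (eq_zero_of_polar_scharlauTransfer_pfister2QF LinearMap.id
      (fun h => one_ne_zero (LinearMap.congr_fun h (1 : F))) hc a) j ?_ ?_ ?_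
  · rw [injective_iff_map_eq_zero]
    rintro ⟨u, s, s'⟩ h
    simp only [hj, Prod.mk_eq_zero] at h
    simp [h.1.1.1, hℓinj s h.1.2.1 h.2.2.1, hℓinj s' h.1.2.2 h.2.2.2]
  · rintro ⟨u, s, s'⟩
    rw [hj, QuadraticMap.prod_apply, scharlauTransfer, LinearMap.compQuadraticMap'_apply,
      pfister2QF_apply, pfister2QF_apply]
    have hsplit : u * u + u * 0 + algebraMap F (AdjoinRoot p) a * (0 * 0) +
        AdjoinRoot.root p * (ℓ s * ℓ s + ℓ s * ℓ s' +
          algebraMap F (AdjoinRoot p) a * (ℓ s' * ℓ s')) =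
        u * u + AdjoinRoot.root p * (ℓ s * ℓ s) + AdjoinRoot.root p * (ℓ s * ℓ s') +
          a • (AdjoinRoot.root p * (ℓ s' * ℓ s')) := by
      rw [Algebra.smul_def]
      ring
    rw [hsplit, map_add, map_add, map_add, map_smul, hℓ, hℓ, hℓ, smul_eq_mul,
      map_mul_self_eq_zero hmonic hinsep hd hd0 ht]
    linear_combination (κ s * κ s + κ s * κ s' + a * (κ s' * κ s') +
      p.coeff 0 * (s.2 * s.2 + s.2 * s'.2 + a * (s'.2 * s'.2))) * CharTwo.two_eq_zero (R := F)
  · simp only [Module.finrank_prod, hL, hD, Module.finrank_self]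
    ring
end

section
/- Let F be a field of characteristic 2, let p = x^d + p₁x^{d-1} + … + p_d ∈ F[x] be a monic irreducible polynomial of degree d that is inseparable (i.e., its formal derivative is zero, equivalently p_k = 0 for all odd k), let L = F[x]/(p), and let t_p : L → F be the F-linear map with t_p(x^j) = 0 for 0 ≤ j ≤ d-2 and t_p(x^{d-1}) = 1. Then for every b ∈ F and every integer k with 1 ≤ k ≤ d-1, the Scharlau transfer t_p∘[x, bx^{k-1}] (a quadratic form of dimension 2d over F) is Witt equivalent to the orthogonal sum, over those indices i ∈ {1,…,k} with p_i ≠ 0, of the 2-fold quadratic Pfister forms ⟨⟨p_i; b p_i γ_{k-i}]], where γ_n ∈ F is the coefficient of x^{d-1} in the remainder of x^{d+n-1} upon division by p for n ≥ 0, and γ_n := 0 for n < 0. (In the Witt group this is the identity t_p'([x, bx^{k-1}]) = Σ_{i=1}^{k} ⟨1,p_i⟩ ⊗ [1, b p_i γ_{k-i}], so in particular this transfer lies in I_q²(F).) -/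
open QuadraticMap Polynomial

theorem QuadraticMap.equivalent_of_linearEquiv {R M₁ M₂ N : Type*} [CommRing R]
    [AddCommGroup M₁] [AddCommGroup M₂] [AddCommGroup N] [Module R M₁] [Module R M₂] [Module R N]
    {Q₁ : QuadraticMap R M₁ N} {Q₂ : QuadraticMap R M₂ N} (e : M₁ ≃ₗ[R] M₂)
    (h : ∀ x, Q₂ (e x) = Q₁ x) : Q₁.Equivalent Q₂ :=
  ⟨⟨e, h⟩⟩

section Prod

variable {R M₁ M₂ M₃ N : Type*} [CommRing R] [AddCommGroup M₁] [AddCommGroup M₂]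
  [AddCommGroup M₃] [AddCommGroup N] [Module R M₁] [Module R M₂] [Module R M₃] [Module R N]

theorem QuadraticMap.Equivalent.prodAssoc (Q₁ : QuadraticMap R M₁ N) (Q₂ : QuadraticMap R M₂ N)
    (Q₃ : QuadraticMap R M₃ N) :
    ((Q₁.prod Q₂).prod Q₃).Equivalent (Q₁.prod (Q₂.prod Q₃)) :=
  equivalent_of_linearEquiv (LinearEquiv.prodAssoc R M₁ M₂ M₃) fun _ => by simp [add_assoc]

end Prod

section Pi

variable {R M₁ M₂ N ι κ : Type*} [CommRing R] [AddCommGroup M₁] [AddCommGroup M₂] [AddCommGroup N]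
  [Module R M₁] [Module R M₂] [Module R N] [Fintype ι] [Fintype κ]

theorem QuadraticMap.Equivalent.pi_comp_equiv (Q : κ → QuadraticMap R M₁ N) (e : ι ≃ κ) :
    (QuadraticMap.pi fun i => Q (e i)).Equivalent (QuadraticMap.pi Q) :=
  equivalent_of_linearEquiv (LinearEquiv.funCongrLeft R M₁ e.symm) fun x => by
    simp [QuadraticMap.pi_apply, ← e.sum_comp]

theorem QuadraticMap.Equivalent.pi_sum (Q : ι ⊕ κ → QuadraticMap R M₁ N) :
    (QuadraticMap.pi Q).Equivalent
      ((QuadraticMap.pi fun i => Q (Sum.inl i)).prod (QuadraticMap.pi fun j => Q (Sum.inr j))) :=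
  equivalent_of_linearEquiv (LinearEquiv.sumArrowLequivProdArrow ι κ R M₁) fun x => by
    simp [QuadraticMap.pi_apply]

theorem QuadraticMap.Equivalent.pi_option (Q : Option ι → QuadraticMap R M₁ N) :
    (QuadraticMap.pi Q).Equivalent ((Q none).prod (QuadraticMap.pi fun i => Q (some i))) :=
  equivalent_of_linearEquiv (LinearEquiv.piOptionEquivProd R) fun x => by
    simp [QuadraticMap.pi_apply, Fintype.sum_option, LinearEquiv.piOptionEquivProd]

theorem QuadraticMap.Equivalent.pi_prod (Q : ι → QuadraticMap R M₁ N)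
    (Q' : ι → QuadraticMap R M₂ N) :
    (QuadraticMap.pi fun i => (Q i).prod (Q' i)).Equivalent
      ((QuadraticMap.pi Q).prod (QuadraticMap.pi Q')) :=
  equivalent_of_linearEquiv
    { toFun := fun x => (fun i => (x i).1, fun i => (x i).2)
      invFun := fun y i => (y.1 i, y.2 i)
      map_add' := fun _ _ => rfl
      map_smul' := fun _ _ => rfl
      left_inv := fun _ => rfl
      right_inv := fun _ => rfl } fun x => by
    simp [QuadraticMap.pi_apply, Finset.sum_add_distrib]

end Pi

@[simp]
theorem binQF_apply {K : Type*} [CommRing K] (a b : K) (x : K × K) :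
    binQF K a b x = a * (x.1 * x.1) + x.1 * x.2 + b * (x.2 * x.2) := by
  simp [binQF]

@[simp]
theorem hypQF_apply {K : Type*} [CommRing K] (x : K × K) : hypQF K x = x.1 * x.2 := by
  simp [hypQF]

theorem binQF_zero_left_equivalent {K : Type*} [CommRing K] (b : K) :
    (binQF K 0 b).Equivalent (hypQF K) :=
  equivalent_of_linearEquiv
    { toFun := fun x => (x.1 + b * x.2, x.2)
      invFun := fun x => (x.1 - b * x.2, x.2)
      map_add' := fun x y => by ext <;> simp; ring
      map_smul' := fun c x => by ext <;> simp; ring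
      left_inv := fun x => by simp
      right_inv := fun x => by simp } fun x => by simp; ring

theorem binQF_zero_right_equivalent {K : Type*} [CommRing K] (a : K) :
    (binQF K a 0).Equivalent (hypQF K) :=
  equivalent_of_linearEquiv
    { toFun := fun x => (x.1, x.2 + a * x.1)
      invFun := fun x => (x.1, x.2 - a * x.1)
      map_add' := fun x y => by ext <;> simp; ring
      map_smul' := fun c x => by ext <;> simp; ring
      left_inv := fun x => by simp
      right_inv := fun x => by simp } fun x => by simp; ring

theorem smul_binQF_one_equivalent {K : Type*} [Field K] {c : K} (hc : c ≠ 0) (e : K) :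
    (c • binQF K 1 (c * e)).Equivalent (binQF K c e) :=
  equivalent_of_linearEquiv
    ((LinearEquiv.refl K K).prodCongr (LinearEquiv.smulOfNeZero K K c hc)) fun x => by
    simp; ring

/-- Adding a hyperbolic plane merges a sum of forms `[1, eᵢ]` into the single form `[1, ∑ eᵢ]`
and hyperbolic planes. -/
theorem pi_binQF_one_prod_hypQF_equivalent {K ι : Type*} [CommRing K] [CharP K 2] [Fintype ι]
    (e : ι → K) :
    ((QuadraticMap.pi fun i => binQF K 1 (e i)).prod (hypQF K)).Equivalent
      ((binQF K 1 (∑ i, e i)).prod (QuadraticMap.pi fun _ : ι => hypQF K)) := by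
  have h2 : (2 : K) = 0 := CharTwo.two_eq_zero
  refine equivalent_of_linearEquiv
    { toFun := fun x => ((x.2.1 + ∑ i, (x.1 i).1, x.2.2 + x.2.1),
        fun i => ((x.1 i).1 + e i * ((x.1 i).2 + (x.2.2 + x.2.1)), (x.1 i).2 + (x.2.2 + x.2.1)))
      invFun := fun y => (fun i => ((y.2 i).1 + e i * (y.2 i).2, (y.2 i).2 + y.1.2),
        (y.1.1 + ∑ i, ((y.2 i).1 + e i * (y.2 i).2),
          y.1.2 + (y.1.1 + ∑ i, ((y.2 i).1 + e i * (y.2 i).2))))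
      map_add' := fun x y => by
        ext <;> simp [Finset.sum_add_distrib] <;> ring
      map_smul' := fun c x => by
        ext <;> simp [← Finset.mul_sum] <;> ring
      left_inv := fun x => by
        ext <;> simp [add_assoc, CharTwo.add_self_eq_zero]
      right_inv := fun x => by
        ext <;> simp [add_assoc, CharTwo.add_self_eq_zero] } fun x => ?_
  obtain ⟨x, r, s⟩ := x
  have h1 (i : ι) : ((x i).1 + e i * ((x i).2 + (s + r))) * ((x i).2 + (s + r)) =
      (x i).1 * (x i).2 + (x i).1 * (s + r) + e i * ((x i).2 * (x i).2)
        + e i * ((s + r) * (s + r)) := by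
    linear_combination e i * (x i).2 * (s + r) * h2
  have h3 : (∑ i, (x i).1) * ∑ i, (x i).1 = ∑ i, (x i).1 * (x i).1 := by
    simpa [pow_two] using CharTwo.sum_sq Finset.univ fun i => (x i).1
  simp [QuadraticMap.pi_apply, h1, Finset.sum_add_distrib, ← Finset.sum_mul, ← h3]
  grind

section Transfer

variable {F L ι : Type*} [Field F] [CommRing L] [Algebra F L] [Fintype ι]

/-- If `w` and `v` are dual bases for `(y, z) ↦ t (y * z)`, then the transfer of a binary form
is diagonalised by them in characteristic two. -/
theorem scharlauTransfer_binQF_equivalent [CharP L 2] [DecidableEq ι] (t : L →ₗ[F] F)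
    (w v : Module.Basis ι F L) (hwv : ∀ i j, t (w i * v j) = if i = j then 1 else 0) (a c : L) :
    (scharlauTransfer (L × L) t (binQF L a c)).Equivalent
      (QuadraticMap.pi fun i => binQF F (t (a * (w i * w i))) (t (c * (v i * v i)))) := by
  have hsq (y : L) (u : Module.Basis ι F L) (r : ι → F) :
      t (y * ((∑ i, r i • u i) * ∑ i, r i • u i)) = ∑ i, t (y * (u i * u i)) * (r i * r i) := by
    have := CharTwo.sum_sq Finset.univ fun i => r i • u i
    simp only [pow_two] at this
    rw [this, Finset.mul_sum, map_sum]
    refine Finset.sum_congr rfl fun i _ => ?_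
    rw [smul_mul_smul_comm, mul_smul_comm, map_smul, smul_eq_mul, mul_comm]
  refine Equivalent.symm (equivalent_of_linearEquiv
    (({ toFun := fun x => (fun i => (x i).1, fun i => (x i).2)
        invFun := fun y i => (y.1 i, y.2 i)
        map_add' := fun _ _ => rfl
        map_smul' := fun _ _ => rfl
        left_inv := fun _ => rfl
        right_inv := fun _ => rfl } : (ι → F × F) ≃ₗ[F] (ι → F) × (ι → F)).trans
      (w.equivFun.symm.prodCongr v.equivFun.symm)) fun x => ?_)
  have hmul : t ((∑ i, (x i).1 • w i) * ∑ i, (x i).2 • v i) = ∑ i, (x i).1 * (x i).2 := by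
    simp [Finset.sum_mul_sum, hwv, mul_comm]
  simp [scharlauTransfer, QuadraticMap.pi_apply, Module.Basis.equivFun_symm_apply, hsq, hmul,
    Finset.sum_add_distrib]

end Transfer

theorem Polynomial.coeff_iterate_divX {R : Type*} [Semiring R] (p : R[X]) (n m : ℕ) :
    (divX^[n] p).coeff m = p.coeff (m + n) := by
  induction n generalizing m with
  | zero => simp
  | succ n ih => rw [Function.iterate_succ_apply', coeff_divX, ih]; congr 1; ring

section Functional

variable {F : Type*} [Field F] {p : F[X]} {t : AdjoinRoot p →ₗ[F] F}

theorem AdjoinRoot.apply_mk_eq_sum (t : AdjoinRoot p →ₗ[F] F) (f : F[X]) :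
    t (AdjoinRoot.mk p f) = f.sum fun n a => a * t (AdjoinRoot.root p ^ n) := by
  conv_lhs => rw [f.as_sum_support_C_mul_X_pow]
  simp only [map_sum, map_mul, map_pow, AdjoinRoot.mk_X, AdjoinRoot.mk_C, Polynomial.sum_def]
  refine Finset.sum_congr rfl fun n _ => ?_
  rw [← AdjoinRoot.algebraMap_eq, ← Algebra.smul_def, map_smul, smul_eq_mul]

theorem AdjoinRoot.apply_mk_of_degree_lt
    (ht : ∀ j < p.natDegree, t (AdjoinRoot.root p ^ j) = if j = p.natDegree - 1 then 1 else 0)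
    {f : F[X]} (hf : ∀ n, p.natDegree ≤ n → f.coeff n = 0) :
    t (AdjoinRoot.mk p f) = f.coeff (p.natDegree - 1) := by
  rw [AdjoinRoot.apply_mk_eq_sum, Polynomial.sum_def,
    Finset.sum_congr rfl (g := fun n => if n = p.natDegree - 1 then f.coeff n else 0)]
  · simp only [Finset.sum_ite_eq', mem_support_iff]
    grind
  · intro n hn
    rw [ht n (by by_contra h; exact (mem_support_iff.1 hn) (hf n (by omega)))]
    simp

theorem AdjoinRoot.apply_root_pow_mul_mk_iterate_divX (hp : p.Monic)
    (ht : ∀ j < p.natDegree, t (AdjoinRoot.root p ^ j) = if j = p.natDegree - 1 then 1 else 0)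
    {i j : ℕ} (hj : j < p.natDegree) :
    t (AdjoinRoot.root p ^ j * AdjoinRoot.mk p (divX^[i + 1] p)) = if i = j then 1 else 0 := by
  rw [← AdjoinRoot.mk_X, ← map_pow, ← map_mul]
  have hc (n : ℕ) : (X ^ j * divX^[i + 1] p).coeff n =
      if j ≤ n then p.coeff (n - j + (i + 1)) else 0 := by
    rw [coeff_X_pow_mul', Polynomial.coeff_iterate_divX]
  rcases le_or_gt j i with hji | hji
  · rw [AdjoinRoot.apply_mk_of_degree_lt ht, hc, if_pos (by omega)]
    · split_ifs with h
      · rw [show p.natDegree - 1 - j + (i + 1) = p.natDegree by omega]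
        exact hp
      · exact coeff_eq_zero_of_natDegree_lt (by omega)
    · intro n hn
      rw [hc, if_pos (by omega)]
      exact coeff_eq_zero_of_natDegree_lt (by omega)
  · have hmk : AdjoinRoot.mk p (X ^ j * divX^[i + 1] p) =
        AdjoinRoot.mk p (X ^ j * divX^[i + 1] p - X ^ (j - (i + 1)) * p) := by simp
    have hz (n : ℕ) (hn : p.natDegree - 1 ≤ n) :
        (X ^ j * divX^[i + 1] p - X ^ (j - (i + 1)) * p).coeff n = 0 := by
      rw [coeff_sub, hc, coeff_X_pow_mul', if_pos (by omega), if_pos (by omega), sub_eq_zero]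
      congr 1
      omega
    rw [hmk, AdjoinRoot.apply_mk_of_degree_lt ht fun n hn => hz n (by omega), hz _ le_rfl,
      if_neg (by omega)]

theorem AdjoinRoot.apply_mk_mul_mk_iterate_divX (hp : p.Monic)
    (ht : ∀ j < p.natDegree, t (AdjoinRoot.root p ^ j) = if j = p.natDegree - 1 then 1 else 0)
    {i : ℕ} {f : F[X]} (hf : ∀ n, p.natDegree ≤ n → f.coeff n = 0) :
    t (AdjoinRoot.mk p f * AdjoinRoot.mk p (divX^[i + 1] p)) = f.coeff i := by
  have := AdjoinRoot.apply_mk_eq_sum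
    (t ∘ₗ LinearMap.mulRight F (AdjoinRoot.mk p (divX^[i + 1] p))) f
  simp only [LinearMap.comp_apply, LinearMap.mulRight_apply] at this
  rw [this, Polynomial.sum_def,
    Finset.sum_congr rfl (g := fun n => if i = n then f.coeff n else 0)]
  · simp only [Finset.sum_ite_eq, mem_support_iff]
    grind
  · intro n hn
    rw [AdjoinRoot.apply_root_pow_mul_mk_iterate_divX hp ht
      (by by_contra h; exact (mem_support_iff.1 hn) (hf n (by omega)))]
    simp

theorem AdjoinRoot.apply_root_mul_mk_iterate_divX_sq [CharP F 2] (hp : p.Monic)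
    (ht : ∀ j < p.natDegree, t (AdjoinRoot.root p ^ j) = if j = p.natDegree - 1 then 1 else 0)
    {i : ℕ} (hi : i < p.natDegree) :
    t (AdjoinRoot.root p *
      (AdjoinRoot.mk p (divX^[i + 1] p) * AdjoinRoot.mk p (divX^[i + 1] p))) =
      p.coeff (2 * i) := by
  rw [← mul_assoc, ← AdjoinRoot.mk_X, ← map_mul]
  rcases Nat.eq_zero_or_pos i with rfl | hi0
  · have hmk : AdjoinRoot.mk p (X * divX^[0 + 1] p) = AdjoinRoot.mk p (C (p.coeff 0)) := by
      have h := congrArg (AdjoinRoot.mk p) p.X_mul_divX_add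
      rw [AdjoinRoot.mk_self, map_add, ← eq_neg_iff_add_eq_zero, ← map_neg, ← C_neg,
        CharTwo.neg_eq] at h
      exact h
    rw [hmk, AdjoinRoot.apply_mk_mul_mk_iterate_divX hp ht]
    · simp
    · intro n hn
      rw [coeff_C, if_neg (by omega)]
  · obtain ⟨i, rfl⟩ : ∃ m, i = m + 1 := ⟨i - 1, by omega⟩
    rw [AdjoinRoot.apply_mk_mul_mk_iterate_divX hp ht]
    · rw [coeff_X_mul, Polynomial.coeff_iterate_divX]
      congr 1
      ring
    · rintro (_ | n) hn
      · omega
      · rw [coeff_X_mul, Polynomial.coeff_iterate_divX]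
        exact coeff_eq_zero_of_natDegree_lt (by omega)

theorem AdjoinRoot.apply_root_pow_eq_coeff_modByMonic (hp : p.Monic)
    (ht : ∀ j < p.natDegree, t (AdjoinRoot.root p ^ j) = if j = p.natDegree - 1 then 1 else 0)
    (n : ℕ) :
    t (AdjoinRoot.root p ^ n) = ((X ^ n : F[X]) %ₘ p).coeff (p.natDegree - 1) := by
  have hmk : AdjoinRoot.root p ^ n = AdjoinRoot.mk p (X ^ n %ₘ p) := by
    rw [← AdjoinRoot.modByMonicHom_mk hp, AdjoinRoot.mk_leftInverse hp]
    simp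
  rw [hmk]
  refine AdjoinRoot.apply_mk_of_degree_lt ht fun m hm => ?_
  refine coeff_eq_zero_of_degree_lt ((degree_modByMonic_lt _ hp).trans_le ?_)
  rw [degree_eq_natDegree hp.ne_zero]
  exact_mod_cast hm

/-- The transfer of `[x, c]` along `t`, written as a sum of binary forms over the base field. -/
theorem scharlauTransfer_binQF_root_equivalent [CharP F 2] (hp : p.Monic) (hirr : Irreducible p)
    (ht : ∀ j < p.natDegree, t (AdjoinRoot.root p ^ j) = if j = p.natDegree - 1 then 1 else 0)
    (c : AdjoinRoot p) :
    (scharlauTransfer _ t (binQF (AdjoinRoot p) (AdjoinRoot.root p) c)).Equivalent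
      (QuadraticMap.pi fun i : Fin p.natDegree =>
        binQF F (p.coeff (2 * i)) (t (c * AdjoinRoot.root p ^ (2 * (i : ℕ))))) := by
  have := Fact.mk hirr
  have : CharP (AdjoinRoot p) 2 := charP_of_injective_algebraMap' F 2
  let v : Module.Basis (Fin p.natDegree) F (AdjoinRoot p) := AdjoinRoot.powerBasisAux' hp
  have hv (i : Fin p.natDegree) : v i = AdjoinRoot.root p ^ (i : ℕ) :=
    (AdjoinRoot.powerBasis' hp).basis_eq_pow i
  have hdual (i j : Fin p.natDegree) :
      t (AdjoinRoot.mk p (divX^[(i : ℕ) + 1] p) * v j) = if i = j then 1 else 0 := by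
    rw [mul_comm, hv, AdjoinRoot.apply_root_pow_mul_mk_iterate_divX hp ht j.2]
    simp [Fin.ext_iff]
  have hli : LinearIndependent F
      fun i : Fin p.natDegree => AdjoinRoot.mk p (divX^[(i : ℕ) + 1] p) := by
    refine Fintype.linearIndependent_iff.2 fun g hg j => ?_
    have := congrArg (fun y => t (y * v j)) hg
    simpa only [Finset.sum_mul, smul_mul_assoc, map_sum, map_smul, hdual, smul_eq_mul, mul_ite,
      mul_one, mul_zero, Finset.sum_ite_eq', Finset.mem_univ, if_true, zero_mul, map_zero] using this
  have : Nonempty (Fin p.natDegree) := ⟨0, hirr.natDegree_pos⟩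
  let w := basisOfLinearIndependentOfCardEqFinrank hli (Module.finrank_eq_card_basis v).symm
  have hw (i : Fin p.natDegree) : w i = AdjoinRoot.mk p (divX^[(i : ℕ) + 1] p) := by simp [w]
  convert! scharlauTransfer_binQF_equivalent t w v (fun i j => by rw [hw, hdual]) _ c using 4
    with i
  · rw [hw, AdjoinRoot.apply_root_mul_mk_iterate_divX_sq hp ht i.2]
  · rw [hv, two_mul, pow_add]

end Functional

/-- Members of a family that are hyperbolic planes outside the image of an injection `e` may be
split off. -/
theorem pi_equivalent_prod_hypPow {K ι κ : Type*} [CommRing K] [Fintype ι] [Fintype κ]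
    (Q : κ → QuadraticForm K (K × K)) {e : ι → κ} (he : Function.Injective e)
    (hQ : ∀ j ∉ Set.range e, (Q j).Equivalent (hypQF K)) :
    ∃ n, (QuadraticMap.pi Q).Equivalent
      ((QuadraticMap.pi fun i => Q (e i)).prod (hypPow K n)) := by
  classical
  let f := Fintype.equivFin ((Set.range e)ᶜ : Set κ)
  refine ⟨Fintype.card ((Set.range e)ᶜ : Set κ), ((Equivalent.pi_comp_equiv Q
    ((Equiv.sumCongr (Equiv.ofInjective e he) f.symm).trans
      (Equiv.Set.sumCompl (Set.range e)))).symm.trans (Equivalent.pi_sum _)).trans ?_⟩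
  exact Equivalent.prod (by simpa using Equivalent.refl _)
    (Equivalent.pi fun j => by simpa using hQ _ (f.symm j).2)

theorem Polynomial.even_of_coeff_ne_zero {F : Type*} [Field F] [CharP F 2] {p : F[X]}
    (hp : derivative p = 0) {n : ℕ} (hn : p.coeff n ≠ 0) : Even n := by
  rcases n with _ | n
  · simp
  have h := congrArg (fun q => q.coeff n) hp
  simp only [coeff_derivative, coeff_zero, mul_eq_zero, hn, false_or] at h
  rw [even_iff_two_dvd, ← CharP.cast_eq_zero_iff F 2]
  exact_mod_cast h

/-- The linear recurrence satisfied by the values of `t` at powers of the root. -/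
theorem AdjoinRoot.apply_root_pow_add_natDegree {F : Type*} [Field F] [CharP F 2] {p : F[X]}
    {t : AdjoinRoot p →ₗ[F] F} (hp : p.Monic)
    (ht : ∀ j < p.natDegree, t (AdjoinRoot.root p ^ j) = if j = p.natDegree - 1 then 1 else 0)
    {k : ℕ} (hk : 1 ≤ k) (hkp : k ≤ p.natDegree) :
    t (AdjoinRoot.root p ^ (k - 1 + p.natDegree)) = ∑ i : Fin k,
      p.coeff (p.natDegree - ((i : ℕ) + 1)) *
        t (AdjoinRoot.root p ^ (k - 1 + (p.natDegree - ((i : ℕ) + 1)))) := by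
  have h := AdjoinRoot.apply_mk_eq_sum
    (t ∘ₗ LinearMap.mulLeft F (AdjoinRoot.root p ^ (k - 1))) p
  simp only [LinearMap.comp_apply, LinearMap.mulLeft_apply, AdjoinRoot.mk_self, map_zero,
    ← pow_add] at h
  rw [Polynomial.sum_over_range _ (by simp), Finset.sum_range_succ, hp.coeff_natDegree, one_mul,
    eq_comm, add_comm, ← eq_neg_iff_add_eq_zero, CharTwo.neg_eq] at h
  rw [h, ← Finset.sum_range_reflect, Fin.sum_univ_eq_sum_range fun i =>
    p.coeff (p.natDegree - (i + 1)) * t (AdjoinRoot.root p ^ (k - 1 + (p.natDegree - (i + 1)))),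
    ← Finset.sum_subset (Finset.range_subset_range.2 hkp)]
  · refine Finset.sum_congr rfl fun i _ => ?_
    rw [show p.natDegree - 1 - i = p.natDegree - (i + 1) by omega]
  · intro i hi hik
    simp only [Finset.mem_range] at hi hik
    rw [ht _ (by omega), if_neg (by omega), mul_zero]

theorem pi_hypQF_equivalent_hypPow (K ι : Type*) [CommRing K] [Fintype ι] :
    (QuadraticMap.pi fun _ : ι => hypQF K).Equivalent (hypPow K (Fintype.card ι)) :=
  Equivalent.pi_comp_equiv (fun _ => hypQF K) (Fintype.equivFin ι)

theorem hypQF_prod_hypPow_equivalent (K : Type*) [CommRing K] (n : ℕ) :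
    ((hypQF K).prod (hypPow K n)).Equivalent (hypPow K (n + 1)) :=
  ((Equivalent.pi_comp_equiv (fun _ => hypQF K) (finSuccEquiv n)).trans
    (Equivalent.pi_option _)).symm

open scoped Classical in
/-- For `p` monic irreducible and inseparable of degree `d` over a field `F` of
characteristic `2`, and `1 ≤ k ≤ d-1`, the Scharlau transfer of `[x, b·x^{k-1}]` is Witt
equivalent to the orthogonal sum, over the indices `i ∈ {1,…,k}` with `p_i ≠ 0`, of the
2-fold quadratic Pfister forms `⟨⟨p_i; b·p_i·γ_{k-i}]]`. -/
theorem transfer_x_bx_pow_inseparable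
    (F : Type*) [Field F] [CharP F 2] (p : Polynomial F)
    (hmonic : p.Monic) (hirr : Irreducible p) (hinsep : Polynomial.derivative p = 0)
    (d : ℕ) (hd : p.natDegree = d)
    (t : AdjoinRoot p →ₗ[F] F)
    (ht : ∀ j : ℕ, j < d → t (AdjoinRoot.root p ^ j) = if j = d - 1 then 1 else 0)
    (γ : ℤ → F)
    (hγ : ∀ n : ℤ, γ n =
      if n < 0 then 0 else ((X : Polynomial F) ^ (d + n.toNat - 1) %ₘ p).coeff (d - 1))
    (b : F) (k : ℕ) (hk1 : 1 ≤ k) (hkd : k ≤ d - 1) :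
    WittEquiv
      (scharlauTransfer _ t
        (binQF (AdjoinRoot p) (AdjoinRoot.root p)
          (algebraMap F (AdjoinRoot p) b * AdjoinRoot.root p ^ (k - 1))))
      (QuadraticMap.pi fun i : {i : Fin k // p.coeff (d - ((i : ℕ) + 1)) ≠ 0} =>
        pfister2QF F (p.coeff (d - ((i : ℕ) + 1)))
          (b * p.coeff (d - ((i : ℕ) + 1)) * γ ((k : ℤ) - ((i : ℕ) + 1)))) := by
  subst hd
  have heven (n : ℕ) (hn : p.coeff n ≠ 0) : Even n := even_of_coeff_ne_zero hinsep hn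
  have hdeven : Even p.natDegree := heven _ (by rw [hmonic.coeff_natDegree]; exact one_ne_zero)
  have hγt (n : ℕ) : γ n = t (AdjoinRoot.root p ^ (p.natDegree + n - 1)) := by
    rw [hγ, if_neg (by omega), Int.toNat_natCast,
      AdjoinRoot.apply_root_pow_eq_coeff_modByMonic hmonic ht]
  let S := {i : Fin k // p.coeff (p.natDegree - ((i : ℕ) + 1)) ≠ 0}
  let P : S → F := fun i => p.coeff (p.natDegree - ((i : ℕ) + 1))
  let G : S → F := fun i => b * γ ((k : ℤ) - ((i : ℕ) + 1))
  let Q : Fin p.natDegree → QuadraticForm F (F × F) := fun i =>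
    binQF F (p.coeff (2 * i)) (t ((algebraMap F (AdjoinRoot p) b * AdjoinRoot.root p ^ (k - 1)) *
      AdjoinRoot.root p ^ (2 * (i : ℕ))))
  have hb (m : ℕ) : t ((algebraMap F (AdjoinRoot p) b * AdjoinRoot.root p ^ (k - 1)) *
      AdjoinRoot.root p ^ m) = b * t (AdjoinRoot.root p ^ (k - 1 + m)) := by
    rw [mul_assoc, ← pow_add, ← Algebra.smul_def, map_smul, smul_eq_mul]
  let e : Option S → Fin p.natDegree := fun o =>
    ⟨o.elim (p.natDegree / 2) fun i => (p.natDegree - ((i : ℕ) + 1)) / 2, by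
      cases o <;> simp only [Option.elim] <;> omega⟩
  have he_none : 2 * (e none : ℕ) = p.natDegree := Nat.two_mul_div_two_of_even hdeven
  have he_some (i : S) : 2 * (e (some i) : ℕ) = p.natDegree - ((i : ℕ) + 1) :=
    Nat.two_mul_div_two_of_even (heven _ i.2)
  have he : Function.Injective e := by
    have hlt (i : S) : ((i : Fin k) : ℕ) < k := i.1.2
    rintro (_ | i) (_ | j) hij
    · rfl
    · have h := he_some j; have := hlt j; rw [← hij, he_none] at h; omega
    · have h := he_some i; have := hlt i; rw [hij, he_none] at h; omega
    · have h1 := he_some i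
      have := hlt i
      have := hlt j
      rw [hij, he_some j] at h1
      congr 1
      apply Subtype.ext
      apply Fin.ext
      omega
  have hγsub (i : Fin k) : γ ((k : ℤ) - ((i : ℕ) + 1)) =
      t (AdjoinRoot.root p ^ (k - 1 + (p.natDegree - ((i : ℕ) + 1)))) := by
    rw [show (k : ℤ) - ((i : ℕ) + 1) = ((k - ((i : ℕ) + 1) : ℕ) : ℤ) by omega, hγt]
    congr 2
    omega
  have hQe (i : S) : Q (e (some i)) = binQF F (P i) (G i) := by
    simp only [Q, P, G, he_some, hb, hγsub]
  have hQnone : Q (e none) = binQF F 1 (b * γ k) := by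
    simp only [Q, he_none, hb, hγt, hmonic.coeff_natDegree]
    congr 4
    omega
  have hQhyp (j : Fin p.natDegree) (hj : j ∉ Set.range e) : (Q j).Equivalent (hypQF F) := by
    by_cases hc : p.coeff (2 * j) = 0
    · simp only [Q, hc]
      exact binQF_zero_left_equivalent _
    · have hle := le_natDegree_of_ne_zero hc
      have hlt : 2 * (j : ℕ) + k < p.natDegree := by
        by_contra hcon
        rcases hle.eq_or_lt with h | h
        · exact hj ⟨none, Fin.ext (by omega)⟩
        · have hcoe : p.natDegree - (p.natDegree - 2 * (j : ℕ) - 1 + 1) = 2 * j := by omega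
          refine hj ⟨some ⟨⟨p.natDegree - 2 * j - 1, by omega⟩, by simpa only [hcoe] using hc⟩,
            Fin.ext ?_⟩
          have := he_some ⟨⟨p.natDegree - 2 * j - 1, by omega⟩, by simpa only [hcoe] using hc⟩
          simp only at this
          omega
      simp only [Q, hb]
      rw [ht _ (by omega), if_neg (by omega), mul_zero]
      exact binQF_zero_right_equivalent _
  have hsum : ∑ i, P i * G i = b * γ k := by
    rw [← Finset.sum_subtype (Finset.univ.filter fun i : Fin k =>
        p.coeff (p.natDegree - ((i : ℕ) + 1)) ≠ 0) (by simp) fun i : Fin k =>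
        p.coeff (p.natDegree - ((i : ℕ) + 1)) * (b * γ ((k : ℤ) - ((i : ℕ) + 1))),
      Finset.sum_filter_of_ne fun i _ hi => left_ne_zero_of_mul hi, hγt,
      show p.natDegree + k - 1 = k - 1 + p.natDegree by omega,
      AdjoinRoot.apply_root_pow_add_natDegree hmonic ht hk1 (by omega), Finset.mul_sum]
    refine Finset.sum_congr rfl fun i _ => ?_
    rw [hγsub]
    ring
  obtain ⟨n, hn⟩ := pi_equivalent_prod_hypPow Q he hQhyp
  have hleft := ((scharlauTransfer_binQF_root_equivalent hmonic hirr ht _).trans hn).trans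
    ((Equivalent.pi_option _).prod (Equivalent.refl _))
  simp only [hQnone, hQe] at hleft
  have hright : (QuadraticMap.pi fun i : S => pfister2QF F (P i) (P i * G i)).Equivalent
      ((QuadraticMap.pi fun i => binQF F 1 (P i * G i)).prod
        (QuadraticMap.pi fun i => binQF F (P i) (G i))) :=
    (Equivalent.pi fun i : S => (Equivalent.refl (binQF F 1 (P i * G i))).prod
      (smul_binQF_one_equivalent i.2 (G i))).trans (Equivalent.pi_prod _ _)
  have hmerge := (pi_binQF_one_prod_hypQF_equivalent fun i => P i * G i).trans
    ((Equivalent.refl _).prod (pi_hypQF_equivalent_hypPow F S))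
  rw [hsum] at hmerge
  have hmain : WittEquiv _ _ := ⟨Fintype.card S, n + 1,
    (hleft.prod (Equivalent.refl _)).trans <|
    (Equivalent.prodAssoc _ _ _).trans <|
    ((Equivalent.refl _).prod ⟨IsometryEquiv.prodComm _ _⟩).trans <|
    Equivalent.trans ⟨IsometryEquiv.prodProdProdComm _ _ _ _⟩ <|
    (hmerge.symm.prod (Equivalent.refl _)).trans <|
    Equivalent.trans ⟨IsometryEquiv.prodProdProdComm _ _ _ _⟩ <|
    hright.symm.prod (hypQF_prod_hypPow_equivalent F n)⟩
  convert! hmain using 4 with i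
  simp only [P, G]
  ring
end
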